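/- Let R ∈ ℂ(z)^{m×m} be a nonzero para-skew-Hermitian rational matrix. Then there do not exist a natural number p and constant matrices A ∈ ℂ^{p×p}, B, C ∈ ℂ^{p×m}, D ∈ ℂ^{m×m} with det(z·A − A^H) ≠ 0 in ℂ(z) such that R = (z·D − D^H) + (z·B^H − C^H)·(z·A − A^H)⁻¹·(z·C − B); that is, R is not the transfer function of any *-anti-palindromic linear system matrix. -/

import Mathlib

open Polynomial Matrix

set_option synthInstance.maxHeartbeats 1000000
set_option maxHeartbeats 1000000

noncomputable section

/-- Coefficientwise complex conjugation on rational functions. -/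
def conjRF : RatFunc ℂ →+* RatFunc ℂ :=
  RatFunc.mapRingHom (Polynomial.mapRingHom (starRingEnd ℂ))
    (by
      intro x hx
      simp only [Submonoid.mem_comap, mem_nonZeroDivisors_iff_ne_zero] at *
      intro h
      exact hx (Polynomial.map_injective _ (starRingEnd ℂ).injective (by simpa using h)))

/-- Substitution of `g` for the variable in `f`. -/
def subst (g f : RatFunc ℂ) : RatFunc ℂ := RatFunc.eval (algebraMap ℂ (RatFunc ℂ)) g f

/-- Constant complex matrices regarded as matrices over `ℂ(z)`. -/
def toRF {n o : Type*} (A : Matrix n o ℂ) : Matrix n o (RatFunc ℂ) :=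
  A.map (algebraMap ℂ (RatFunc ℂ))

/-- The para-conjugate `R^*(1/z)`. -/
def paraConj {n : Type*} (R : Matrix n n (RatFunc ℂ)) : Matrix n n (RatFunc ℂ) :=
  fun i j => subst (RatFunc.X)⁻¹ (conjRF (R j i))

def IsParaHermitian {n : Type*} (R : Matrix n n (RatFunc ℂ)) : Prop := paraConj R = R

def IsParaSkewHermitian {n : Type*} (R : Matrix n n (RatFunc ℂ)) : Prop := paraConj R = -R

/-- The variable `z` of `ℂ(z)`. -/
def zz : RatFunc ℂ := RatFunc.X

/-!
On `ℂ(z)`, `f ↦ (conj f)(z⁻¹)` is an involution that conjugates constants and inverts `z`, so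
para-conjugation is the conjugate transpose over a star ring in which `z * star z = 1`. There every
pencil satisfies `(z • M - Nᴴ)ᴴ = -z⁻¹ • (z • N - Mᴴ)`. In a `*`-anti-palindromic transfer function
`G` these scalars combine to `Gᴴ = -z⁻¹ • G`; if also `Gᴴ = -G`, then `(z - 1) • G = 0`.
-/

section StarRing

variable {K ι κ : Type*} [CommRing K] [StarRing K] {z : K}

theorem conjTranspose_smul_sub_conjTranspose (hz : z * star z = 1) (M : Matrix ι κ K)
    (N : Matrix κ ι K) : (z • M - Nᴴ)ᴴ = -star z • (z • N - Mᴴ) := by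
  rw [conjTranspose_sub, conjTranspose_smul, conjTranspose_conjTranspose, neg_smul, smul_sub,
    smul_smul, mul_comm, hz, one_smul, neg_sub]

variable [Fintype ι] [DecidableEq ι]

theorem conjTranspose_inv_of_conjTranspose_eq_smul (hz : z * star z = 1) {P : Matrix ι ι K}
    (hP : IsUnit P.det) (h : Pᴴ = -star z • P) : P⁻¹ᴴ = -z • P⁻¹ := by
  rw [conjTranspose_nonsing_inv, h]
  apply inv_eq_left_inv
  rw [smul_mul_smul_comm, neg_mul_neg, hz, one_smul, nonsing_inv_mul P hP]

/-- The transfer function of the `*`-anti-palindromic linear system matrix with state matrix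
`z • A - Aᴴ`. The coefficients may lie in any star ring `K`; the classical case, with constant
coefficients, is `K = ℂ(z)` with star `f ↦ (conj f)(z⁻¹)`. -/
def antiPalindromicTransfer (z : K) (A : Matrix ι ι K) (B C : Matrix ι κ K) (D : Matrix κ κ K) :
    Matrix κ κ K :=
  (z • D - Dᴴ) + (z • Bᴴ - Cᴴ) * (z • A - Aᴴ)⁻¹ * (z • C - B)

theorem conjTranspose_antiPalindromicTransfer (hz : z * star z = 1) {A : Matrix ι ι K}
    (hA : IsUnit (z • A - Aᴴ).det) (B C : Matrix ι κ K) (D : Matrix κ κ K) :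
    (antiPalindromicTransfer z A B C D)ᴴ = -star z • antiPalindromicTransfer z A B C D := by
  have hinv : (z • A - Aᴴ)⁻¹ᴴ = -z • (z • A - Aᴴ)⁻¹ :=
    conjTranspose_inv_of_conjTranspose_eq_smul hz hA
      (conjTranspose_smul_sub_conjTranspose hz A A)
  have hin : (z • C - B)ᴴ = -star z • (z • Bᴴ - Cᴴ) := by
    simpa only [conjTranspose_conjTranspose] using conjTranspose_smul_sub_conjTranspose hz C Bᴴ
  have hout : (z • Bᴴ - Cᴴ)ᴴ = -star z • (z • C - B) := by
    simpa only [conjTranspose_conjTranspose] using conjTranspose_smul_sub_conjTranspose hz Bᴴ C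
  have hscalar : -star z * -z * -star z = -star z := by rw [mul_assoc, neg_mul_neg, hz, mul_one]
  rw [antiPalindromicTransfer, conjTranspose_add, conjTranspose_mul, conjTranspose_mul, hinv, hin,
    hout, conjTranspose_smul_sub_conjTranspose hz D D]
  simp only [Matrix.smul_mul, Matrix.mul_smul, smul_smul, smul_add, Matrix.mul_assoc, hscalar]

theorem paraSkewHermitian_no_antipalindromic_system_matrix_general (hz : z * star z = 1)
    (hz_one : IsLeftRegular (z - 1)) {R : Matrix κ κ K} (hR : R ≠ 0) (hskew : Rᴴ = -R) :
    ¬ ∃ (A : Matrix ι ι K) (B C : Matrix ι κ K) (D : Matrix κ κ K),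
      IsUnit (z • A - Aᴴ).det ∧ R = antiPalindromicTransfer z A B C D := by
  rintro ⟨A, B, C, D, hA, hG⟩
  have hR_star : R = star z • R := by
    rw [← neg_inj, ← hskew, ← neg_smul, hG]
    exact conjTranspose_antiPalindromicTransfer hz hA B C D
  have hR_smul : (z - 1) • R = 0 := by
    rw [sub_smul, one_smul, sub_eq_zero]
    nth_rw 1 [hR_star]
    rw [smul_smul, hz, one_smul]
  refine hR (Matrix.ext fun i j ↦ hz_one.mul_left_eq_zero_iff.mp ?_)
  exact congrFun₂ hR_smul i j

end StarRing

section RatFunc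

theorem ratFunc_ringHom_ext {K S : Type*} [CommRing K] [IsDomain K] [CommSemiring S]
    {φ ψ : RatFunc K →+* S}
    (hC : ∀ a : K, φ (algebraMap K (RatFunc K) a) = ψ (algebraMap K (RatFunc K) a))
    (hX : φ RatFunc.X = ψ RatFunc.X) : φ = ψ := by
  refine IsLocalization.ringHom_ext (nonZeroDivisors K[X]) (Polynomial.ringHom_ext ?_ ?_)
  · simpa using hC
  · simpa using hX

theorem transcendental_X_inv (K : Type*) [Field K] : Transcendental K (RatFunc.X : RatFunc K)⁻¹ :=
  fun h ↦ RatFunc.transcendental_X (by simpa only [inv_inv] using h.inv)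

universe u

variable {K L : Type u} [Field K] [Field L] [Algebra K L] {g : L}

/-- Evaluation of rational functions at a transcendental `g`, as an algebra homomorphism.
Transcendence keeps every denominator nonzero, so the junk value of division never enters. -/
def ratFuncEvalAlgHom (hg : Transcendental K g) : RatFunc K →ₐ[K] L :=
  RatFunc.liftAlgHom (aeval g) <|
    nonZeroDivisors_le_comap_nonZeroDivisors_of_injective _ (transcendental_iff_injective.mp hg)

theorem ratFuncEvalAlgHom_apply (hg : Transcendental K g) (f : RatFunc K) :
    ratFuncEvalAlgHom hg f = RatFunc.eval (algebraMap K L) g f :=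
  RatFunc.liftAlgHom_apply _ _ f

theorem ratFuncEvalAlgHom_X (hg : Transcendental K g) :
    ratFuncEvalAlgHom hg RatFunc.X = g := by
  rw [ratFuncEvalAlgHom_apply, RatFunc.eval_X]

end RatFunc

theorem conjRF_algebraMap_polynomial (q : ℂ[X]) :
    conjRF (algebraMap ℂ[X] (RatFunc ℂ) q) =
      algebraMap ℂ[X] (RatFunc ℂ) (q.map (starRingEnd ℂ)) := by
  simpa only [conjRF, RatFunc.coe_mapRingHom_eq_coe_map, coe_mapRingHom, map_one, div_one] using
    RatFunc.map_apply_div (Polynomial.mapRingHom (starRingEnd ℂ))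
      (nonZeroDivisors_le_comap_nonZeroDivisors_of_injective _
        (Polynomial.map_injective _ (starRingEnd ℂ).injective)) q 1

theorem conjRF_algebraMap (a : ℂ) :
    conjRF (algebraMap ℂ (RatFunc ℂ) a) = algebraMap ℂ (RatFunc ℂ) (star a) := by
  simpa [RatFunc.algebraMap_eq_C] using conjRF_algebraMap_polynomial (Polynomial.C a)

theorem conjRF_X : conjRF RatFunc.X = RatFunc.X := by
  simpa using conjRF_algebraMap_polynomial Polynomial.X

/-- The map `f ↦ (conj f)(z⁻¹)` on `ℂ(z)`, which para-conjugation applies to the entries of the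
transposed matrix. -/
def paraConjHom : RatFunc ℂ →+* RatFunc ℂ :=
  (ratFuncEvalAlgHom (transcendental_X_inv ℂ) : RatFunc ℂ →+* RatFunc ℂ).comp conjRF

theorem paraConjHom_apply (f : RatFunc ℂ) :
    paraConjHom f = subst (RatFunc.X)⁻¹ (conjRF f) :=
  ratFuncEvalAlgHom_apply (transcendental_X_inv ℂ) (conjRF f)

theorem paraConjHom_algebraMap (a : ℂ) :
    paraConjHom (algebraMap ℂ (RatFunc ℂ) a) = algebraMap ℂ (RatFunc ℂ) (star a) := by
  simp only [paraConjHom, RingHom.comp_apply, conjRF_algebraMap, RingHom.coe_coe, AlgHom.commutes]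

theorem paraConjHom_X : paraConjHom RatFunc.X = (RatFunc.X)⁻¹ := by
  simp only [paraConjHom, RingHom.comp_apply, conjRF_X, RingHom.coe_coe, ratFuncEvalAlgHom_X]

theorem paraConjHom_involutive : Function.Involutive paraConjHom := by
  have hcomp : paraConjHom.comp paraConjHom = RingHom.id (RatFunc ℂ) :=
    ratFunc_ringHom_ext
      (fun a ↦ by
        simp only [RingHom.comp_apply, paraConjHom_algebraMap, star_star, RingHom.id_apply])
      (by simp only [RingHom.comp_apply, paraConjHom_X, map_inv₀, inv_inv, RingHom.id_apply])
  exact RingHom.congr_fun hcomp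

/-- The star ring structure `star f = (conj f)(z⁻¹)` on `ℂ(z)`, for which `Rᴴ` is the para-conjugate
of `R`. It is only a local instance, since `ℂ(z)` has other natural involutions. -/
abbrev paraStarRing : StarRing (RatFunc ℂ) where
  star := paraConjHom
  star_involutive := paraConjHom_involutive
  star_mul f g := by rw [map_mul, mul_comm]
  star_add := map_add paraConjHom

attribute [local instance] paraStarRing

theorem conjTranspose_eq_paraConj {n : Type*} (R : Matrix n n (RatFunc ℂ)) : Rᴴ = paraConj R :=
  Matrix.ext fun i j ↦ paraConjHom_apply (R j i)

theorem toRF_conjTranspose {n o : Type*} (A : Matrix n o ℂ) : toRF Aᴴ = (toRF A)ᴴ :=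
  Matrix.ext fun i j ↦ (paraConjHom_algebraMap (A j i)).symm

theorem zz_mul_star_zz : zz * star zz = 1 :=
  (congrArg (zz * ·) paraConjHom_X).trans (mul_inv_cancel₀ RatFunc.X_ne_zero)

theorem zz_ne_one : zz ≠ 1 :=
  fun h ↦ RatFunc.transcendental_X (K := ℂ) (h.symm.subst isAlgebraic_one)

/-- a nonzero para-skew-Hermitian rational matrix is not the transfer function of any
`*`-anti-palindromic linear system matrix. -/
theorem paraSkewHermitian_no_antipalindromic_system_matrix (m : ℕ)
    (R : Matrix (Fin m) (Fin m) (RatFunc ℂ)) (hR : R ≠ 0) (hpara : IsParaSkewHermitian R) :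
    ¬ ∃ (p : ℕ) (A : Matrix (Fin p) (Fin p) ℂ) (B C : Matrix (Fin p) (Fin m) ℂ)
        (D : Matrix (Fin m) (Fin m) ℂ),
      (zz • toRF A - toRF Aᴴ).det ≠ 0 ∧
      R = (zz • toRF D - toRF Dᴴ) +
        (zz • toRF Bᴴ - toRF Cᴴ) * (zz • toRF A - toRF Aᴴ)⁻¹ * (zz • toRF C - toRF B) := by
  rintro ⟨p, A, B, C, D, hdet, hG⟩
  simp only [toRF_conjTranspose] at hdet hG
  exact paraSkewHermitian_no_antipalindromic_system_matrix_general zz_mul_star_zz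
    (IsRegular.of_ne_zero (sub_ne_zero.mpr zz_ne_one)).left hR
    ((conjTranspose_eq_paraConj R).trans hpara)
    ⟨toRF A, toRF B, toRF C, toRF D, isUnit_iff_ne_zero.mpr hdet, hG⟩
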